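/- arXiv:1507.01308 — 2 statements merged into one kernel-verified Lean document; each statement's English description precedes it below -/
import Mathlib

section
/- Let n, m1, m2, s1, s2 be positive integers with s1 ≤ m1, s2 ≤ m2 and n > s1 + s2. Fix x0 ∈ ℂ^{m1} with x0 ≠ 0 and ‖x0‖₀ ≤ s1, and y0 ∈ ℂ^{m2} with y0 ≠ 0 and ‖y0‖₀ ≤ s2. Then for Lebesgue-almost all pairs (D, E) ∈ ℂ^{n×m1} × ℂ^{n×m2}, every pair (x, y) ∈ ℂ^{m1} × ℂ^{m2} with ‖x‖₀ ≤ s1, ‖y‖₀ ≤ s2 and (D x) ⊛ (E y) = (D x0) ⊛ (E y0) satisfies x = σ x0 and y = σ⁻¹ y0 for some nonzero σ ∈ ℂ. (Weak identifiability of blind deconvolution with sparsity constraints.) -/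
/-!
The discrete Fourier transform along the row index turns circular convolution into a pointwise
product and acts on `(D, E)` as an invertible linear map, so it preserves null sets
(`dft_cconv`, `ae_of_ae_dft`). Writing `a k`, `b k` for the rows of the transformed matrices, the
hypothesis becomes the `n` scalar equations `(a k ⬝ x) (b k ⬝ y) = (a k ⬝ x0) (b k ⬝ y0)`, that is,
`b k ⬝ w k = 0` with `w k = (a k ⬝ x) y - (a k ⬝ x0) y0`.

For fixed supports, `(x, y)` ranges over a complex space of dimension `s1 + s2 < n`. If every `w k`
is nonzero, each equation can be solved for one entry of `b k`, so the pairs `(a, b)` admitting such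
an `(x, y)` form a finite union of differentiable images of subsets of spaces of smaller dimension, which are
null sets (`image_null_of_finrank_lt`, `ae_not_orthogonal`). If some `w k` vanishes, then `y` is a
nonzero multiple `τ y0`, because `a k ⬝ x0 ≠ 0` almost surely. Dividing by `b l ⬝ y0 ≠ 0`, the
equations say that every `a l` annihilates `τ x - x0`; since `s1 < n`, the same elimination argument
shows that almost surely this forces `τ x = x0`.
-/

open MeasureTheory Filter

/-- Circular convolution of two vectors in `ℂ^n` indexed by `ZMod n`. -/
noncomputable def cconv {n : ℕ} [NeZero n] (u v : ZMod n → ℂ) : ZMod n → ℂ :=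
  fun k => ∑ j : ZMod n, u j * v (k - j)

/-- Matrix-vector multiplication `D x` for `D ∈ ℂ^{n×m}`. -/
noncomputable def mApply {n m : ℕ} [NeZero n] (D : ZMod n → Fin m → ℂ) (x : Fin m → ℂ) :
    ZMod n → ℂ :=
  fun k => ∑ i, D k i * x i

/-- `‖x‖₀`, the number of nonzero entries of a vector. -/
noncomputable def l0 {m : ℕ} (x : Fin m → ℂ) : ℕ := (Function.support x).ncard

/-! ### Elimination -/

/-- The volume of a product is additive Haar; stated separately because instance search does not
unfold the volume to a product measure. -/
instance isAddHaarMeasure_volume_prod {G H : Type*} [NormedAddCommGroup G] [NormedSpace ℝ G]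
    [FiniteDimensional ℝ G] [MeasureSpace G] [BorelSpace G] [NormedAddCommGroup H]
    [NormedSpace ℝ H] [FiniteDimensional ℝ H] [MeasureSpace H] [BorelSpace H]
    [(volume : Measure G).IsAddHaarMeasure] [(volume : Measure H).IsAddHaarMeasure] :
    (volume : Measure (G × H)).IsAddHaarMeasure := by
  have := FiniteDimensional.proper_real G
  have := FiniteDimensional.proper_real H
  exact Measure.prod.instIsAddHaarMeasure _ _

instance isAddHaarMeasure_volume_matrix {ι : Type*} {m : ℕ} [Fintype ι] :
    (volume : Measure (ι → Fin m → ℂ)).IsAddHaarMeasure :=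
  have : (volume : Measure (Fin m → ℂ)).IsAddHaarMeasure := Measure.pi.isAddHaarMeasure _
  Measure.pi.isAddHaarMeasure _

/-- A differentiable map from a space of smaller dimension has a null image: precomposed with a
linear surjection it becomes a map of `E` into itself whose derivative is everywhere singular. -/
lemma image_null_of_finrank_lt {V E : Type*} [NormedAddCommGroup V] [NormedSpace ℝ V]
    [FiniteDimensional ℝ V] [NormedAddCommGroup E] [NormedSpace ℝ E] [FiniteDimensional ℝ E]
    [MeasurableSpace E] [BorelSpace E] (μ : Measure E) [μ.IsAddHaarMeasure]
    (h : Module.finrank ℝ V < Module.finrank ℝ E) (f : V → E) (s : Set V)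
    (hf : DifferentiableOn ℝ f s) : μ (f '' s) = 0 := by
  obtain ⟨j, hj⟩ := (finrank_le_iff_exists_linearMap (R := ℝ) (M := V) (M' := E)).1 h.le
  obtain ⟨p, hp⟩ := j.exists_leftInverse_of_injective (LinearMap.ker_eq_bot.2 hj)
  have hp' : ∀ v, p (j v) = v := fun v => LinearMap.congr_fun hp v
  have himg : f '' s = (f ∘ p) '' (p ⁻¹' s) := by
    ext e
    constructor
    · rintro ⟨v, hv, rfl⟩
      exact ⟨j v, by simpa [hp'] using hv, by simp [hp']⟩
    · rintro ⟨v, hv, rfl⟩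
      exact ⟨p v, hv, rfl⟩
  rw [himg]
  refine addHaar_image_eq_zero_of_det_fderivWithin_eq_zero μ
    (f' := fun x => (fderivWithin ℝ f s (p x)).comp p.toContinuousLinearMap) ?_ ?_
  · intro x hx
    exact (hf (p x) hx).hasFDerivWithinAt.comp x
      p.toContinuousLinearMap.hasFDerivAt.hasFDerivWithinAt (fun y hy => hy)
  · intro x hx
    have hker := p.ker_ne_bot_of_finrank_lt h
    rw [ContinuousLinearMap.det, LinearMap.det_eq_zero_iff_ker_ne_bot]
    intro hb
    refine hker (eq_bot_iff.2 fun v hv => hb ▸ ?_)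
    rw [LinearMap.mem_ker] at hv ⊢
    simp [hv]

/-- Solves `∑ j, B k j * w k j = 0` for the entries `B k (i k)`: the remaining entries of `B` are
those of `C`. Meaningful only when every pivot `w k (i k)` is nonzero. -/
noncomputable def solveRows {ι : Type} {m : ℕ} (i : ι → Fin m) (w : ι → Fin m → ℂ)
    (C : ∀ k, {j // j ≠ i k} → ℂ) : ι → Fin m → ℂ :=
  fun k j => if h : j = i k then -(∑ l, C k l * w k l) / w k (i k) else C k ⟨j, h⟩

lemma solveRows_eq {ι : Type} {m : ℕ} (i : ι → Fin m) (w : ι → Fin m → ℂ)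
    (B : ι → Fin m → ℂ) (hw : ∀ k, w k (i k) ≠ 0) (hB : ∀ k, ∑ j, B k j * w k j = 0) :
    solveRows i w (fun k l => B k l) = B := by
  funext k j
  unfold solveRows
  split_ifs with h
  · subst h
    rw [div_eq_iff (hw k), neg_eq_iff_add_eq_zero, ← hB k,
      ← Finset.add_sum_erase _ _ (Finset.mem_univ (i k)), add_comm]
    congr 1
    exact (Finset.sum_subtype (Finset.univ.erase (i k)) (by simp)
      (fun j => B k j * w k j)).symm
  · rfl

/-- If the vectors `w p q k` depend differentiably on `q` and on a parameter `p` whose real dimension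
is less than twice the number of rows, then for almost every `(q, B)` no parameter makes all of them nonzero and
orthogonal to the respective rows of `B`. -/
lemma ae_not_orthogonal {ι P Q : Type} {m : ℕ} [Fintype ι] [NormedAddCommGroup P]
    [NormedSpace ℝ P] [FiniteDimensional ℝ P] [NormedAddCommGroup Q] [NormedSpace ℝ Q]
    [FiniteDimensional ℝ Q] [MeasureSpace Q] [BorelSpace Q]
    [(volume : Measure Q).IsAddHaarMeasure]
    (hd : Module.finrank ℝ P < 2 * Fintype.card ι)
    (w : P → Q → ι → Fin m → ℂ)
    (hw : ∀ k j, Differentiable ℝ fun z : P × Q => w z.1 z.2 k j) :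
    ∀ᵐ z : Q × (ι → Fin m → ℂ), ∀ p, (∀ k, w p z.1 k ≠ 0) →
      ¬ ∀ k, ∑ j, z.2 k j * w p z.1 k j = 0 := by
  classical
  -- Fix the position `i k` of a nonzero entry of each `w p q k`; there are finitely many choices.
  have key : ∀ i : ι → Fin m, ∀ᵐ z : Q × (ι → Fin m → ℂ), ∀ p, (∀ k, w p z.1 k (i k) ≠ 0) →
      ¬ ∀ k, ∑ j, z.2 k j * w p z.1 k j = 0 := by
    intro i
    let V := P × Q × (∀ k, {j // j ≠ i k} → ℂ)
    let f : V → Q × (ι → Fin m → ℂ) := fun v => (v.2.1, solveRows i (w v.1 v.2.1) v.2.2)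
    let s : Set V := {v | ∀ k, w v.1 v.2.1 k (i k) ≠ 0}
    have hf : DifferentiableOn ℝ f s := by
      have hw' : ∀ k j, Differentiable ℝ fun v : V => w v.1 v.2.1 k j := fun k j =>
        (hw k j).comp (g := fun z : P × Q => w z.1 z.2 k j) (f := fun v : V => (v.1, v.2.1))
          (differentiable_fst.prodMk (differentiable_fst.comp differentiable_snd))
      have hC : ∀ k l, Differentiable ℝ fun v : V => v.2.2 k l := by
        intro k l
        fun_prop
      refine DifferentiableOn.prodMk (by fun_prop) ?_
      refine differentiableOn_pi.2 fun k => differentiableOn_pi.2 fun j => ?_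
      unfold solveRows
      by_cases h : j = i k
      · simp only [h, dif_pos]
        simp only [div_eq_mul_inv]
        refine DifferentiableOn.fun_mul ?_
          (DifferentiableOn.fun_inv (hw' k (i k)).differentiableOn (fun v hv => hv k))
        refine DifferentiableOn.neg (DifferentiableOn.fun_sum fun l _ => ?_)
        exact ((hC k l).mul (hw' k l)).differentiableOn
      · simp only [h, dif_neg, not_false_eq_true]
        exact (hC k ⟨j, h⟩).differentiableOn
    have hdim : Module.finrank ℝ V < Module.finrank ℝ (Q × (ι → Fin m → ℂ)) := by
      have h1 : Module.finrank ℝ (∀ k, {j // j ≠ i k} → ℂ) + 2 * Fintype.card ι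
          = Module.finrank ℝ (ι → Fin m → ℂ) := by
        rw [Module.finrank_pi_fintype, Module.finrank_pi_fintype, ← Finset.card_univ,
          mul_comm, ← smul_eq_mul, ← Finset.sum_const, ← Finset.sum_add_distrib]
        refine Finset.sum_congr rfl fun k _ => ?_
        have : 0 < m := (i k).pos
        simp [Module.finrank_pi_fintype, Complex.finrank_real_complex]
        omega
      simp only [V, Module.finrank_prod]
      omega
    have h0 := image_null_of_finrank_lt (volume : Measure (Q × (ι → Fin m → ℂ))) hdim f s hf
    refine measure_mono_null ?_ h0
    intro z hz
    simp only [Set.mem_compl_iff, Set.mem_ofPred_eq, not_forall] at hz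
    obtain ⟨p, h1, h2⟩ := hz
    exact ⟨(p, z.1, fun k l => z.2 k l), h1,
      Prod.ext rfl (solveRows_eq i (w p z.1) z.2 h1 (not_exists_not.1 h2))⟩
  filter_upwards [ae_all_iff.2 key] with z hz p hp
  choose i hi using fun k => Function.ne_iff.1 (hp k)
  exact hz i p hi

/-- Almost every matrix has no row orthogonal to a given nonzero vector. -/
lemma ae_row_ne_zero {ι : Type} {m : ℕ} [Fintype ι] (x : Fin m → ℂ) (hx : x ≠ 0) :
    ∀ᵐ A : ι → Fin m → ℂ, ∀ k, ∑ j, A k j * x j ≠ 0 := by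
  classical
  rw [ae_all_iff]
  intro k
  let φ : (ι → Fin m → ℂ) →ₗ[ℝ] ℂ :=
    { toFun := fun A => ∑ j, A k j * x j
      map_add' := fun A B => by simp [add_mul, Finset.sum_add_distrib]
      map_smul' := fun c A => by simp [Finset.mul_sum, mul_assoc] }
  obtain ⟨j, hj⟩ := Function.ne_iff.1 hx
  have hne : LinearMap.ker φ ≠ ⊤ := by
    intro h
    have h1 : φ (fun _ => Pi.single j 1) = 0 := by
      rw [← LinearMap.mem_ker, h]; trivial
    apply hj
    simpa [φ, Pi.single_apply] using h1
  have h0 := Measure.addHaar_submodule (volume : Measure (ι → Fin m → ℂ)) _ hne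
  refine measure_mono_null ?_ h0
  intro A hA
  simpa [φ] using hA

/-! ### Sparse vectors -/

/-- The vector in `ℂ^m` with entries `u t` at the positions `e t`. -/
noncomputable def spread {s m : ℕ} (e : Fin s → Fin m) (u : Fin s → ℂ) : Fin m → ℂ :=
  fun i => ∑ t, u t * (Pi.single (e t) 1 : Fin m → ℂ) i

lemma exists_spread {s m : ℕ} (hsm : s ≤ m) (x : Fin m → ℂ) (hx : l0 x ≤ s) :
    ∃ e u, x = spread (s := s) e u := by
  classical
  have hc : (Finset.univ.filter fun i => x i ≠ 0).card ≤ s := by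
    rw [l0, ← Set.ncard_coe_finset] at *
    convert hx using 2
    ext i; simp
  obtain ⟨T, hT, hTc⟩ := Finset.exists_superset_card_eq hc (by simpa using hsm)
  refine ⟨T.orderEmbOfFin hTc, fun t => x (T.orderEmbOfFin hTc t), ?_⟩
  funext i
  simp only [spread, Pi.single_apply, mul_ite, mul_one, mul_zero]
  by_cases hi : x i = 0
  · rw [hi, Finset.sum_eq_zero]
    intro t _
    split_ifs with h
    · rw [← h, hi]
    · rfl
  · have hiT : i ∈ T := hT (by simpa using hi)
    obtain ⟨t, rfl⟩ : i ∈ Set.range (T.orderEmbOfFin hTc) := by simpa using hiT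
    simp [(T.orderEmbOfFin hTc).injective.eq_iff]

/-! ### Fourier transform -/

lemma dft_cconv {n : ℕ} [NeZero n] (u v : ZMod n → ℂ) (k : ZMod n) :
    ZMod.dft (cconv u v) k = ZMod.dft u k * ZMod.dft v k := by
  simp only [ZMod.dft_apply, cconv, smul_eq_mul, Finset.mul_sum, Finset.sum_mul]
  rw [Finset.sum_comm]
  conv_rhs => rw [Finset.sum_comm]
  refine Finset.sum_congr rfl fun j _ => ?_
  refine Fintype.sum_equiv (Equiv.subRight j) _ _ fun l => ?_
  have : -(l * k) = -(j * k) + -((l - j) * k) := by ring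
  rw [this, AddChar.map_add_eq_mul]
  simp only [Equiv.subRight_apply]
  ring

lemma dft_mApply {n m : ℕ} [NeZero n] (D : ZMod n → Fin m → ℂ) (x : Fin m → ℂ) (k : ZMod n) :
    ZMod.dft (mApply D x) k = ∑ i, ZMod.dft D k i * x i := by
  simp only [ZMod.dft_apply, mApply, smul_eq_mul, Finset.mul_sum, Finset.sum_apply, Pi.smul_apply,
    Finset.sum_mul]
  rw [Finset.sum_comm]
  simp only [mul_assoc]

lemma ae_of_ae_dft {n m1 m2 : ℕ} [NeZero n]
    {p : (ZMod n → Fin m1 → ℂ) × (ZMod n → Fin m2 → ℂ) → Prop} (h : ∀ᵐ z, p z) :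
    ∀ᵐ z : (ZMod n → Fin m1 → ℂ) × (ZMod n → Fin m2 → ℂ), p (ZMod.dft z.1, ZMod.dft z.2) := by
  let T : ((ZMod n → Fin m1 → ℂ) × (ZMod n → Fin m2 → ℂ)) ≃ₗ[ℝ] _ :=
    (ZMod.dft.prodCongr ZMod.dft).restrictScalars ℝ
  exact (Measure.LinearMap.quasiMeasurePreserving volume (T : _ →ₗ[ℝ] _) T.isUnit_det'.ne_zero).ae h

/-! ### Identifiability -/

/-- Weak identifiability of blind deconvolution with sparsity constraints:
if `n > s1 + s2`, then for Lebesgue-almost all `(D, E)`, every `s1`/`s2`-sparse `(x, y)` with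
`(Dx) ⊛ (Ey) = (Dx0) ⊛ (Ey0)` is a scaled version of `(x0, y0)`. -/
theorem weak_identifiability_sparse (n m1 m2 s1 s2 : ℕ) [NeZero n]
    (hm1 : 0 < m1) (hm2 : 0 < m2) (hs1 : 0 < s1) (hs2 : 0 < s2)
    (hs1m : s1 ≤ m1) (hs2m : s2 ≤ m2) (hn : s1 + s2 < n)
    (x0 : Fin m1 → ℂ) (hx0 : x0 ≠ 0) (hx0s : l0 x0 ≤ s1)
    (y0 : Fin m2 → ℂ) (hy0 : y0 ≠ 0) (hy0s : l0 y0 ≤ s2) :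
    ∀ᵐ DE : (ZMod n → Fin m1 → ℂ) × (ZMod n → Fin m2 → ℂ),
      ∀ x : Fin m1 → ℂ, ∀ y : Fin m2 → ℂ, l0 x ≤ s1 → l0 y ≤ s2 →
        cconv (mApply DE.1 x) (mApply DE.2 y) = cconv (mApply DE.1 x0) (mApply DE.2 y0) →
        ∃ σ : ℂ, σ ≠ 0 ∧ x = σ • x0 ∧ y = σ⁻¹ • y0 := by
  have hcard : Fintype.card (ZMod n) = n := ZMod.card n
  -- `z` stands for the pair of transformed matrices `(a, b)`; `g1` excludes that all `w k` are nonzero.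
  have g1 : ∀ᵐ z : (ZMod n → Fin m1 → ℂ) × (ZMod n → Fin m2 → ℂ),
      ∀ (e1 : Fin s1 → Fin m1) (e2 : Fin s2 → Fin m2), ∀ p : (Fin s1 → ℂ) × (Fin s2 → ℂ),
        (∀ k, (fun j => (∑ i, z.1 k i * spread e1 p.1 i) * spread e2 p.2 j
          - (∑ i, z.1 k i * x0 i) * y0 j) ≠ 0) →
        ¬ ∀ k, ∑ j, z.2 k j * ((∑ i, z.1 k i * spread e1 p.1 i) * spread e2 p.2 j
          - (∑ i, z.1 k i * x0 i) * y0 j) = 0 := by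
    rw [ae_all_iff]; intro e1
    rw [ae_all_iff]; intro e2
    refine ae_not_orthogonal (P := (Fin s1 → ℂ) × (Fin s2 → ℂ)) (Q := ZMod n → Fin m1 → ℂ) ?_
      (fun p A k j => (∑ i, A k i * spread e1 p.1 i) * spread e2 p.2 j
          - (∑ i, A k i * x0 i) * y0 j) ?_
    · rw [hcard]
      simp [Module.finrank_prod, Module.finrank_pi_fintype, Complex.finrank_real_complex]
      omega
    · intro k j
      unfold spread
      fun_prop
  -- No `s1`-sparse vector other than `x0` has the same image under `a` as `x0`. The eliminated
  -- entries are now those of `a`, hence the swap of the two factors.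
  have g2 : ∀ᵐ z : (ZMod n → Fin m1 → ℂ) × (ZMod n → Fin m2 → ℂ),
      ∀ (e1 : Fin s1 → Fin m1), ∀ p : Fin s1 → ℂ,
        (∀ k : ZMod n, (fun j => spread e1 p j - x0 j) ≠ 0) →
        ¬ ∀ k, ∑ j, z.1 k j * (spread e1 p j - x0 j) = 0 := by
    rw [ae_all_iff]; intro e1
    have := ae_not_orthogonal (ι := ZMod n) (P := Fin s1 → ℂ) (Q := ZMod n → Fin m2 → ℂ)
      (by
        rw [hcard]
        simp [Module.finrank_pi_fintype, Complex.finrank_real_complex]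
        omega)
      (fun p _ _ j => spread e1 p j - x0 j)
      (by
        intro k j
        unfold spread
        fun_prop)
    exact (Measure.measurePreserving_swap (μ := (volume : Measure (ZMod n → Fin m1 → ℂ)))
      (ν := (volume : Measure (ZMod n → Fin m2 → ℂ)))).quasiMeasurePreserving.ae this
  have g3 : ∀ᵐ z : (ZMod n → Fin m1 → ℂ) × (ZMod n → Fin m2 → ℂ),
      ∀ k, ∑ j, z.1 k j * x0 j ≠ 0 :=
    Measure.quasiMeasurePreserving_fst.ae (ae_row_ne_zero x0 hx0)
  have g4 : ∀ᵐ z : (ZMod n → Fin m1 → ℂ) × (ZMod n → Fin m2 → ℂ),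
      ∀ k, ∑ j, z.2 k j * y0 j ≠ 0 :=
    Measure.quasiMeasurePreserving_snd.ae (ae_row_ne_zero y0 hy0)
  filter_upwards [ae_of_ae_dft g1, ae_of_ae_dft g2, ae_of_ae_dft g3, ae_of_ae_dft g4]
    with DE h1 h2 h3 h4 x y hxs hys hxy
  have heq : ∀ k, (∑ i, ZMod.dft DE.1 k i * x i) * (∑ i, ZMod.dft DE.2 k i * y i)
      = (∑ i, ZMod.dft DE.1 k i * x0 i) * (∑ i, ZMod.dft DE.2 k i * y0 i) := by
    intro k
    simp only [← dft_mApply, ← dft_cconv, hxy]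
  generalize ZMod.dft DE.1 = A at *
  generalize ZMod.dft DE.2 = B at *
  -- Some `w k` vanishes.
  have hcase : ∃ k, ∀ j, (∑ i, A k i * x i) * y j = (∑ i, A k i * x0 i) * y0 j := by
    by_contra hcon
    push Not at hcon
    obtain ⟨e1, u, rfl⟩ := exists_spread hs1m x hxs
    obtain ⟨e2, v, rfl⟩ := exists_spread hs2m y hys
    refine h1 e1 e2 (u, v) (fun k hk => ?_) (fun k => ?_)
    · obtain ⟨j, hj⟩ := hcon k
      exact hj (sub_eq_zero.1 (congrFun hk j))
    · rw [← sub_eq_zero.2 (heq k)]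
      simp only [mul_sub, Finset.sum_sub_distrib]
      congr 1
      · rw [Finset.mul_sum]; exact Finset.sum_congr rfl fun j _ => by ring
      · rw [Finset.mul_sum]; exact Finset.sum_congr rfl fun j _ => by ring
  obtain ⟨k, hk⟩ := hcase
  obtain ⟨j, hj⟩ := Function.ne_iff.1 hy0
  have hax : (∑ i, A k i * x i) ≠ 0 := by
    intro h
    have := hk j
    rw [h, zero_mul] at this
    exact mul_ne_zero (h3 k) hj this.symm
  obtain ⟨τ, hτ0, hτ⟩ : ∃ τ : ℂ, τ ≠ 0 ∧ y = τ • y0 := by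
    refine ⟨(∑ i, A k i * x0 i) / ∑ i, A k i * x i, div_ne_zero (h3 k) hax, ?_⟩
    funext l
    rw [Pi.smul_apply, smul_eq_mul, div_mul_eq_mul_div, eq_div_iff hax, ← hk l, mul_comm]
  refine ⟨τ⁻¹, inv_ne_zero hτ0, ?_, by rw [inv_inv, hτ]⟩
  have hlin : ∀ l, ∑ i, A l i * (τ * x i - x0 i) = 0 := by
    intro l
    refine (mul_eq_zero.1 ?_).resolve_right (h4 l)
    have := heq l
    rw [hτ] at this
    have e1 : ∑ i, B l i * (τ • y0) i = τ * ∑ i, B l i * y0 i := by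
      rw [Finset.mul_sum]
      exact Finset.sum_congr rfl fun i _ => by simp only [Pi.smul_apply, smul_eq_mul]; ring
    have e2 : ∑ i, A l i * (τ * x i - x0 i) = τ * (∑ i, A l i * x i) - ∑ i, A l i * x0 i := by
      rw [Finset.mul_sum, ← Finset.sum_sub_distrib]
      exact Finset.sum_congr rfl fun i _ => by ring
    rw [e1] at this
    rw [e2]
    linear_combination this
  obtain ⟨e, u, hu⟩ := exists_spread hs1m x hxs
  have hτu : ∀ i, spread e (τ • u) i = τ * x i := by
    intro i
    simp only [hu, spread, Pi.smul_apply, smul_eq_mul, Finset.mul_sum, mul_assoc]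
  have hz : (fun i => spread e (τ • u) i - x0 i) = 0 := by
    by_contra hne
    exact h2 e (τ • u) (fun _ => hne) (fun l => by simpa only [hτu] using hlin l)
  funext i
  have := congrFun hz i
  simp only [hτu, Pi.zero_apply, sub_eq_zero] at this
  rw [Pi.smul_apply, smul_eq_mul, ← this, inv_mul_cancel_left₀ hτ0]
end

section
/- Let n, m1, m2, s1, s2 be positive integers with s1 ≤ m1, s2 ≤ m2 and n > 2(s1 + s2). Then for Lebesgue-almost all pairs (D, E) ∈ ℝ^{n×m1} × ℝ^{n×m2}, the following holds: for every x0 ∈ ℝ^{m1} with x0 ≠ 0 and ‖x0‖₀ ≤ s1, every y0 ∈ ℝ^{m2} with y0 ≠ 0 and ‖y0‖₀ ≤ s2, and every pair (x, y) ∈ ℝ^{m1} × ℝ^{m2} with ‖x‖₀ ≤ s1, ‖y‖₀ ≤ s2 and (D x) ⊛ (E y) = (D x0) ⊛ (E y0), there exists a nonzero σ ∈ ℝ with x = σ x0 and y = σ⁻¹ y0. (Strong identifiability of real blind deconvolution with sparsity constraints, at the same sample complexity as the complex case.) -/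
/-!
Two pairs `(x, y)`, `(x0, y0)` with the same measurement give a matrix `Z = x yᵀ - x0 y0ᵀ` with
`∑ Z a b • (D_a ⊛ E_b) = 0`, where `D_a`, `E_b` are the columns of `D`, `E`; and `Z = 0` only if the
pairs agree up to scaling (`exists_scaling_of_outer_eq`). Once the four supports are fixed, `Z`
ranges over a smooth family with at most `2 (s1 + s2) < n` real parameters, so it is enough that
each nonzero `Z` imposes `n` independent real conditions on `(D, E)`.

Fix an entry with `Z i j ≠ 0` and let `S` be the set of frequencies at which the spectrum of
`u = ∑ a, Z a j • D_a` does not vanish; it is symmetric because `u` is real. By the convolution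
theorem, at each `ω ∈ S` the value `𝓕 (E_j) ω` is obtained from the other columns on dividing by
`𝓕 u ω`, while at each `ω ∉ S` the equation `𝓕 u ω = 0` determines `𝓕 (D_i) ω` on dividing by
`Z i j`. Hence the part of `E_j` on `S` and the part of `D_i` off `S`, together `n` real
coordinates, are differentiable functions of `Z` and of the remaining data
(`measure_annihilator_eq_zero`). The bad pairs `(D, E)` thus lie in countably many differentiable
images of spaces of dimension less than `n (m1 + m2)`, and these are null sets
(`measure_image_eq_zero_of_finrank_lt`).
-/

open MeasureTheory Filter

/-- Circular convolution of two vectors in `ℝ^n` indexed by `ZMod n`. -/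
noncomputable def cconvR {n : ℕ} [NeZero n] (u v : ZMod n → ℝ) : ZMod n → ℝ :=
  fun k => ∑ j : ZMod n, u j * v (k - j)

/-- Matrix-vector multiplication `D x` for `D ∈ ℝ^{n×m}`. -/
noncomputable def mApplyR {n m : ℕ} [NeZero n] (D : ZMod n → Fin m → ℝ) (x : Fin m → ℝ) :
    ZMod n → ℝ :=
  fun k => ∑ i, D k i * x i

/-- `‖x‖₀`, the number of nonzero entries of a vector. -/
noncomputable def l0R {m : ℕ} (x : Fin m → ℝ) : ℕ := (Function.support x).ncard


/-! ### Fourier analysis of real vectors on `ZMod n` -/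

/-- The discrete Fourier transform of a real vector, as an `ℝ`-linear map. -/
noncomputable def realDFT (n : ℕ) [NeZero n] : (ZMod n → ℝ) →ₗ[ℝ] (ZMod n → ℂ) :=
  (ZMod.dft (N := n) (E := ℂ)).toLinearMap.restrictScalars ℝ ∘ₗ
    (Complex.ofRealCLM : ℝ →ₗ[ℝ] ℂ).compLeft (ZMod n)

/-- The real part of the inverse discrete Fourier transform: a left inverse of `realDFT`. -/
noncomputable def realInvDFT (n : ℕ) [NeZero n] : (ZMod n → ℂ) →ₗ[ℝ] (ZMod n → ℝ) :=
  (Complex.reCLM : ℂ →ₗ[ℝ] ℝ).compLeft (ZMod n) ∘ₗ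
    (ZMod.dft (N := n) (E := ℂ)).symm.toLinearMap.restrictScalars ℝ

lemma realDFT_apply {n : ℕ} [NeZero n] (v : ZMod n → ℝ) (ω : ZMod n) :
    realDFT n v ω = ∑ k, ZMod.stdAddChar (-(k * ω)) * (v k : ℂ) := rfl

lemma realInvDFT_apply {n : ℕ} [NeZero n] (g : ZMod n → ℂ) (k : ZMod n) :
    realInvDFT n g k = ((ZMod.dft (N := n) (E := ℂ)).symm g k).re := rfl

lemma realInvDFT_realDFT {n : ℕ} [NeZero n] (v : ZMod n → ℝ) :
    realInvDFT n (realDFT n v) = v := by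
  ext k
  have : realDFT n v = ZMod.dft (fun k => (v k : ℂ)) := rfl
  rw [realInvDFT_apply, this, LinearEquiv.symm_apply_apply, Complex.ofReal_re]

lemma realDFT_neg {n : ℕ} [NeZero n] (v : ZMod n → ℝ) (ω : ZMod n) :
    realDFT n v (-ω) = (starRingEnd ℂ) (realDFT n v ω) := by
  simp only [realDFT_apply, map_sum, map_mul, Complex.conj_ofReal, ← AddChar.map_neg_eq_conj,
    mul_neg]

/-- A conjugate-symmetric spectrum is the spectrum of a real vector. -/
lemma realDFT_realInvDFT {n : ℕ} [NeZero n] (g : ZMod n → ℂ)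
    (hg : ∀ ω, g (-ω) = (starRingEnd ℂ) (g ω)) : realDFT n (realInvDFT n g) = g := by
  have h : (fun k => ((realInvDFT n g k : ℝ) : ℂ)) = ZMod.dft.symm g := by
    ext k
    rw [realInvDFT_apply]
    refine Complex.conj_eq_iff_re.1 ?_
    simp only [ZMod.invDFT_apply, smul_eq_mul, map_mul, map_sum, map_inv₀, Complex.conj_natCast,
      ← AddChar.map_neg_eq_conj, ← hg]
    congr 1
    refine Fintype.sum_equiv (Equiv.neg _) _ _ fun x => ?_
    simp
  change ZMod.dft (fun k => ((realInvDFT n g k : ℝ) : ℂ)) = g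
  rw [h, LinearEquiv.apply_symm_apply]

/-- The convolution theorem. -/
lemma realDFT_cconvR {n : ℕ} [NeZero n] (u v : ZMod n → ℝ) (ω : ZMod n) :
    realDFT n (cconvR u v) ω = realDFT n u ω * realDFT n v ω := by
  simp only [realDFT_apply, cconvR, Complex.ofReal_sum, Complex.ofReal_mul, Finset.mul_sum,
    Finset.sum_mul]
  rw [Finset.sum_comm]
  conv_rhs => rw [Finset.sum_comm]
  refine Finset.sum_congr rfl fun j _ => ?_
  refine Fintype.sum_equiv (Equiv.subRight j) _ _ fun k => ?_
  have : -(k * ω) = -(j * ω) + -((k - j) * ω) := by ring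
  rw [Equiv.subRight_apply, this, AddChar.map_add_eq_mul]
  ring

lemma realDFT_mApplyR {n m : ℕ} [NeZero n] (D : ZMod n → Fin m → ℝ) (x : Fin m → ℝ)
    (ω : ZMod n) :
    realDFT n (mApplyR D x) ω = ∑ i, (x i : ℂ) * realDFT n (fun k => D k i) ω := by
  have : mApplyR D x = ∑ i, x i • fun k => D k i := by
    ext k; simp [mApplyR, mul_comm]
  rw [this, map_sum, Finset.sum_apply]
  simp

/-- The Fourier multiplier by the indicator function of a set `S` of frequencies. -/
noncomputable def bandFilter {n : ℕ} [NeZero n] (S : Finset (ZMod n)) :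
    (ZMod n → ℝ) →ₗ[ℝ] (ZMod n → ℝ) where
  toFun v := realInvDFT n (fun ω => if ω ∈ S then realDFT n v ω else 0)
  map_add' u v := by
    rw [← map_add]; congr 1; ext ω; by_cases h : ω ∈ S <;> simp [h]
  map_smul' c v := by
    rw [RingHom.id_apply, ← map_smul]; congr 1; ext ω; by_cases h : ω ∈ S <;> simp [h]

lemma bandFilter_apply {n : ℕ} [NeZero n] (S : Finset (ZMod n)) (v : ZMod n → ℝ) :
    bandFilter S v = realInvDFT n (fun ω => if ω ∈ S then realDFT n v ω else 0) := rfl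

lemma realDFT_bandFilter {n : ℕ} [NeZero n] {S : Finset (ZMod n)} (hS : ∀ ω, -ω ∈ S ↔ ω ∈ S)
    (v : ZMod n → ℝ) (ω : ZMod n) :
    realDFT n (bandFilter S v) ω = if ω ∈ S then realDFT n v ω else 0 := by
  rw [bandFilter_apply, realDFT_realInvDFT]
  intro ω
  by_cases h : ω ∈ S <;> simp [hS, h, realDFT_neg]

lemma bandFilter_add_compl {n : ℕ} [NeZero n] (S : Finset (ZMod n)) (v : ZMod n → ℝ) :
    bandFilter Sᶜ v + bandFilter S v = v := by
  conv_rhs => rw [← realInvDFT_realDFT v]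
  rw [bandFilter_apply, bandFilter_apply, ← map_add]
  congr 1; ext ω; by_cases h : ω ∈ S <;> simp [h]

lemma bandFilter_idem {n : ℕ} [NeZero n] {S : Finset (ZMod n)} (hS : ∀ ω, -ω ∈ S ↔ ω ∈ S)
    (v : ZMod n → ℝ) : bandFilter S (bandFilter S v) = bandFilter S v := by
  rw [bandFilter_apply]
  simp only [realDFT_bandFilter hS]
  rw [bandFilter_apply]
  congr 1; ext ω; by_cases h : ω ∈ S <;> simp [h]

/-! ### Null sets from dimension counting -/

/-- A differentiable image of a subset of a space of smaller dimension is a null set. -/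
lemma measure_image_eq_zero_of_finrank_lt {V X : Type*}
    [NormedAddCommGroup V] [NormedSpace ℝ V] [FiniteDimensional ℝ V]
    [NormedAddCommGroup X] [NormedSpace ℝ X] [FiniteDimensional ℝ X]
    [MeasurableSpace X] [BorelSpace X] (μ : Measure X) [μ.IsAddHaarMeasure]
    (h : Module.finrank ℝ V < Module.finrank ℝ X) {f : V → X} {s : Set V}
    (hf : DifferentiableOn ℝ f s) : μ (f '' s) = 0 := by
  obtain ⟨ι, hι⟩ := finrank_le_iff_exists_linearMap.1 h.le
  obtain ⟨g, hg⟩ := ι.exists_leftInverse_of_injective (LinearMap.ker_eq_bot.2 hι)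
  have hgι : ∀ v, g (ι v) = v := fun v => LinearMap.congr_fun hg v
  have himg : f '' s = (f ∘ g) '' (ι '' s) := by
    rw [Set.image_image]; simp [hgι]
  rw [himg]
  refine addHaar_image_eq_zero_of_differentiableOn_of_addHaar_eq_zero μ ?_ ?_
  · refine hf.comp (LinearMap.toContinuousLinearMap g).differentiable.differentiableOn ?_
    rintro _ ⟨v, hv, rfl⟩
    simpa [hgι] using hv
  · refine measure_mono_null (t := (LinearMap.range ι : Set X)) ?_ ?_
    · rintro _ ⟨v, -, rfl⟩; exact ⟨v, rfl⟩
    · refine Measure.addHaar_submodule μ _ fun htop => ?_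
      have := LinearMap.finrank_range_le ι
      rw [htop, finrank_top] at this
      omega

/-! ### Pairs `(D, E)` annihilating a matrix from a small family -/

/-- The pairs `(D, E)` such that the part of the column `D_i` with frequencies outside `S` and the
part of the column `E_j` with frequencies in `S` sum to zero. For a symmetric set `S` both parts
then vanish separately, since their spectra have disjoint supports; encoding the two conditions as
one equation in `ℝ^n` makes the codimension `n` visible. -/
noncomputable def freeSpace {n m1 m2 : ℕ} [NeZero n] (S : Finset (ZMod n)) (i : Fin m1)
    (j : Fin m2) : Submodule ℝ ((ZMod n → Fin m1 → ℝ) × (ZMod n → Fin m2 → ℝ)) :=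
  LinearMap.ker <|
    (bandFilter Sᶜ ∘ₗ (LinearMap.proj i : (Fin m1 → ℝ) →ₗ[ℝ] ℝ).compLeft (ZMod n)).coprod
      (bandFilter S ∘ₗ (LinearMap.proj j : (Fin m2 → ℝ) →ₗ[ℝ] ℝ).compLeft (ZMod n))

lemma mem_freeSpace {n m1 m2 : ℕ} [NeZero n] {S : Finset (ZMod n)} {i : Fin m1} {j : Fin m2}
    {w : (ZMod n → Fin m1 → ℝ) × (ZMod n → Fin m2 → ℝ)} :
    w ∈ freeSpace S i j ↔
      bandFilter Sᶜ (fun k => w.1 k i) + bandFilter S (fun k => w.2 k j) = 0 := Iff.rfl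

lemma finrank_freeSpace {n m1 m2 : ℕ} [NeZero n] {S : Finset (ZMod n)}
    (hS : ∀ ω, -ω ∈ S ↔ ω ∈ S) (i : Fin m1) (j : Fin m2) :
    Module.finrank ℝ (freeSpace (n := n) S i j) + n =
      Module.finrank ℝ ((ZMod n → Fin m1 → ℝ) × (ZMod n → Fin m2 → ℝ)) := by
  have hSc : ∀ ω, -ω ∈ Sᶜ ↔ ω ∈ Sᶜ := by simp [hS]
  set L := (bandFilter Sᶜ ∘ₗ (LinearMap.proj i : (Fin m1 → ℝ) →ₗ[ℝ] ℝ).compLeft (ZMod n)).coprod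
      (bandFilter S ∘ₗ (LinearMap.proj j : (Fin m2 → ℝ) →ₗ[ℝ] ℝ).compLeft (ZMod n)) with hL
  have hsurj : LinearMap.range L = ⊤ := by
    refine LinearMap.range_eq_top.2 fun v => ?_
    refine ⟨(fun k _ => bandFilter Sᶜ v k, fun k _ => bandFilter S v k), ?_⟩
    change bandFilter Sᶜ (bandFilter Sᶜ v) + bandFilter S (bandFilter S v) = v
    rw [bandFilter_idem hS, bandFilter_idem hSc, bandFilter_add_compl]
  have := LinearMap.finrank_range_add_finrank_ker L
  rw [hsurj, finrank_top, Module.finrank_fintype_fun_eq_card, ZMod.card] at this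
  change Module.finrank ℝ (LinearMap.ker L) + n = _
  omega

/-- For a matrix-valued family `Z` with fewer than `n` real parameters, the set of `(D, E)`
annihilating some member of the family is a null set. The entry `(i, j)` with `Z i j ≠ 0` and the
support `S` of the spectrum of `∑ i', Z i' j • D_{i'}` are prescribed: then the part of `E_j` on
`S` and the part of `D_i` off `S` are differentiable functions of the parameters and of the
remaining data, which live in a space of codimension `n`. -/
lemma measure_annihilator_eq_zero {n m1 m2 : ℕ} [NeZero n] {P : Type*}
    [NormedAddCommGroup P] [NormedSpace ℝ P] [FiniteDimensional ℝ P]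
    (hP : Module.finrank ℝ P < n) (Z : P → Fin m1 → Fin m2 → ℝ)
    (hZ : ∀ a b, Differentiable ℝ fun θ => Z θ a b)
    (i : Fin m1) (j : Fin m2) {S : Finset (ZMod n)} (hS : ∀ ω, -ω ∈ S ↔ ω ∈ S) :
    volume {w : (ZMod n → Fin m1 → ℝ) × (ZMod n → Fin m2 → ℝ) | ∃ θ, Z θ i j ≠ 0 ∧
      (∀ ω, ∑ b, (∑ a, (Z θ a b : ℂ) * realDFT n (fun k => w.1 k a) ω) *
        realDFT n (fun k => w.2 k b) ω = 0) ∧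
      ∀ ω, ω ∈ S ↔ ∑ a, (Z θ a j : ℂ) * realDFT n (fun k => w.1 k a) ω ≠ 0} = 0 := by
  have hSc : ∀ ω, -ω ∈ Sᶜ ↔ ω ∈ Sᶜ := by simp [hS]
  -- The spectrum of `∑ a, Z a b • D_a`.
  let U : (ZMod n → Fin m1 → ℝ) → P → Fin m2 → ZMod n → ℂ := fun D θ b ω =>
    ∑ a, (Z θ a b : ℂ) * realDFT n (fun k => D k a) ω
  -- The missing part of `D_i`, off `S`.
  let d : (ZMod n → Fin m1 → ℝ) → P → ZMod n → ℂ := fun D θ ω =>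
    if ω ∈ Sᶜ then -(∑ a ∈ Finset.univ.erase i, (Z θ a j : ℂ) * realDFT n (fun k => D k a) ω) *
      ((Z θ i j : ℝ) : ℂ)⁻¹ else 0
  -- The missing part of `E_j`, on `S`.
  let e : (ZMod n → Fin m1 → ℝ) → (ZMod n → Fin m2 → ℝ) → P → ZMod n → ℂ := fun D E θ ω =>
    if ω ∈ S then -(∑ b ∈ Finset.univ.erase j, U D θ b ω * realDFT n (fun k => E k b) ω) *
      (U D θ j ω)⁻¹ else 0
  let G : freeSpace (n := n) S i j × P → (ZMod n → Fin m1 → ℝ) × (ZMod n → Fin m2 → ℝ) :=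
    fun q => (fun k a => q.1.1.1 k a + if a = i then realInvDFT n (d q.1.1.1 q.2) k else 0,
      fun k b => q.1.1.2 k b + if b = j then realInvDFT n (e q.1.1.1 q.1.1.2 q.2) k else 0)
  let s : Set (freeSpace (n := n) S i j × P) :=
    {q | Z q.2 i j ≠ 0 ∧ ∀ ω ∈ S, U q.1.1.1 q.2 j ω ≠ 0}
  have hG : DifferentiableOn ℝ G s := by
    have hdft : ∀ ω, Differentiable ℝ fun v : ZMod n → ℝ => realDFT n v ω := fun ω =>
      (LinearMap.toContinuousLinearMap
        ((LinearMap.proj ω : (ZMod n → ℂ) →ₗ[ℝ] ℂ) ∘ₗ realDFT n)).differentiable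
    have hinv : ∀ k, Differentiable ℝ fun g : ZMod n → ℂ => realInvDFT n g k := fun k =>
      (LinearMap.toContinuousLinearMap
        ((LinearMap.proj k : (ZMod n → ℝ) →ₗ[ℝ] ℝ) ∘ₗ realInvDFT n)).differentiable
    have hcoe : Differentiable ℝ fun q : freeSpace (n := n) S i j × P => q.1.1 :=
      (freeSpace (n := n) S i j).subtypeL.differentiable.comp differentiable_fst
    have h1 : ∀ k a, Differentiable ℝ fun q : freeSpace (n := n) S i j × P => q.1.1.1 k a := by
      intro k a; have := hcoe.fst; fun_prop
    have h2 : ∀ k b, Differentiable ℝ fun q : freeSpace (n := n) S i j × P => q.1.1.2 k b := by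
      intro k b; have := hcoe.snd; fun_prop
    have hD : ∀ a ω, Differentiable ℝ fun q : freeSpace (n := n) S i j × P =>
        realDFT n (fun k => q.1.1.1 k a) ω := fun a ω =>
      (hdft ω).comp (differentiable_pi.2 fun k => h1 k a)
    have hE : ∀ b ω, Differentiable ℝ fun q : freeSpace (n := n) S i j × P =>
        realDFT n (fun k => q.1.1.2 k b) ω := fun b ω =>
      (hdft ω).comp (differentiable_pi.2 fun k => h2 k b)
    have hZ' : ∀ a b, Differentiable ℝ fun q : freeSpace (n := n) S i j × P =>
        ((Z q.2 a b : ℝ) : ℂ) := fun a b =>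
      Complex.ofRealCLM.differentiable.comp ((hZ a b).comp differentiable_snd)
    have hU : ∀ b ω, Differentiable ℝ fun q : freeSpace (n := n) S i j × P =>
        U q.1.1.1 q.2 b ω := fun b ω =>
      Differentiable.fun_sum fun a _ => (hZ' a b).mul (hD a ω)
    have hd : ∀ ω, DifferentiableOn ℝ (fun q : freeSpace (n := n) S i j × P =>
        d q.1.1.1 q.2 ω) s := by
      intro ω
      by_cases hω : ω ∈ Sᶜ
      · simp only [d, if_pos hω]
        refine DifferentiableOn.mul ?_ ?_
        · exact (Differentiable.fun_sum fun a _ => (hZ' a j).mul (hD a ω)).neg.differentiableOn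
        · exact (hZ' i j).differentiableOn.inv fun q hq => Complex.ofReal_ne_zero.2 hq.1
      · simp only [d, if_neg hω]
        exact differentiableOn_const _
    have he : ∀ ω, DifferentiableOn ℝ (fun q : freeSpace (n := n) S i j × P =>
        e q.1.1.1 q.1.1.2 q.2 ω) s := by
      intro ω
      by_cases hω : ω ∈ S
      · simp only [e, if_pos hω]
        refine DifferentiableOn.mul ?_ ?_
        · exact (Differentiable.fun_sum fun b _ => (hU b ω).mul (hE b ω)).neg.differentiableOn
        · exact (hU j ω).differentiableOn.inv fun q hq => hq.2 ω hω
      · simp only [e, if_neg hω]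
        exact differentiableOn_const _
    refine DifferentiableOn.prodMk ?_ ?_
    · refine differentiableOn_pi.2 fun k => differentiableOn_pi.2 fun a => ?_
      refine (h1 k a).differentiableOn.add ?_
      by_cases ha : a = i
      · simp only [if_pos ha]
        exact (hinv k).comp_differentiableOn (differentiableOn_pi.2 hd)
      · simp only [if_neg ha]
        exact differentiableOn_const _
    · refine differentiableOn_pi.2 fun k => differentiableOn_pi.2 fun b => ?_
      refine (h2 k b).differentiableOn.add ?_
      by_cases hb : b = j
      · simp only [if_pos hb]
        exact (hinv k).comp_differentiableOn (differentiableOn_pi.2 he)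
      · simp only [if_neg hb]
        exact differentiableOn_const _
  have hdim : Module.finrank ℝ (freeSpace (n := n) S i j × P) <
      Module.finrank ℝ ((ZMod n → Fin m1 → ℝ) × (ZMod n → Fin m2 → ℝ)) := by
    rw [Module.finrank_prod (R := ℝ) (M := freeSpace (n := n) S i j),
      ← finrank_freeSpace hS i j]
    omega
  have hvol : ∀ m, (volume : Measure (ZMod n → Fin m → ℝ)).IsAddHaarMeasure := fun m =>
    Measure.pi.isAddHaarMeasure _
  have := hvol m1
  have := hvol m2
  have : (volume : Measure ((ZMod n → Fin m1 → ℝ) × (ZMod n → Fin m2 → ℝ))).IsAddHaarMeasure :=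
    Measure.prod.instIsAddHaarMeasure _ _
  refine measure_mono_null ?_ (measure_image_eq_zero_of_finrank_lt volume hdim hG)
  rintro ⟨D, E⟩ ⟨θ, hθ, hann, hsupp⟩
  -- Remove the dependent parts of `D_i` and `E_j`.
  let D' : ZMod n → Fin m1 → ℝ := fun k a =>
    D k a - if a = i then bandFilter Sᶜ (fun k => D k i) k else 0
  let E' : ZMod n → Fin m2 → ℝ := fun k b =>
    E k b - if b = j then bandFilter S (fun k => E k j) k else 0
  have hD'i : (fun k => D' k i) = (fun k => D k i) - bandFilter Sᶜ (fun k => D k i) := by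
    ext k; simp [D']
  have hE'j : (fun k => E' k j) = (fun k => E k j) - bandFilter S (fun k => E k j) := by
    ext k; simp [E']
  have hD'ne : ∀ a, a ≠ i → (fun k => D' k a) = fun k => D k a := by
    intro a ha; ext k; simp [D', ha]
  have hE'ne : ∀ b, b ≠ j → (fun k => E' k b) = fun k => E k b := by
    intro b hb; ext k; simp [E', hb]
  have hmem : (D', E') ∈ freeSpace S i j := by
    rw [mem_freeSpace]
    simp only [hD'i, hE'j, map_sub, bandFilter_idem hS, bandFilter_idem hSc, sub_self, add_zero]
  have hDhat : ∀ ω ∈ S, ∀ a, realDFT n (fun k => D' k a) ω = realDFT n (fun k => D k a) ω := by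
    intro ω hω a
    by_cases ha : a = i
    · subst ha
      rw [hD'i, map_sub, Pi.sub_apply, realDFT_bandFilter hSc]
      simp [hω]
    · rw [hD'ne a ha]
  have hUeq : ∀ ω ∈ S, ∀ b, U D' θ b ω = U D θ b ω := fun ω hω b =>
    Finset.sum_congr rfl fun a _ => by rw [hDhat ω hω a]
  have hdeq : realInvDFT n (d D' θ) = bandFilter Sᶜ (fun k => D k i) := by
    rw [bandFilter_apply]
    congr 1
    ext ω
    by_cases hω : ω ∈ Sᶜ
    · simp only [d, if_pos hω]
      have h0 : ∑ a, (Z θ a j : ℂ) * realDFT n (fun k => D k a) ω = 0 := by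
        by_contra h
        exact Finset.mem_compl.1 hω ((hsupp ω).2 h)
      rw [← Finset.add_sum_erase _ _ (Finset.mem_univ i)] at h0
      rw [Finset.sum_congr rfl fun a ha => by rw [hD'ne a (Finset.ne_of_mem_erase ha)],
        ← eq_neg_of_add_eq_zero_left h0]
      have := Complex.ofReal_ne_zero.2 hθ
      field_simp
    · simp only [d, if_neg hω]
  have heeq : realInvDFT n (e D' E' θ) = bandFilter S (fun k => E k j) := by
    rw [bandFilter_apply]
    congr 1
    ext ω
    by_cases hω : ω ∈ S
    · simp only [e, if_pos hω]
      have h0 : ∑ b, U D θ b ω * realDFT n (fun k => E k b) ω = 0 := hann ω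
      rw [← Finset.add_sum_erase _ _ (Finset.mem_univ j)] at h0
      rw [Finset.sum_congr rfl fun b hb => by
          rw [hE'ne b (Finset.ne_of_mem_erase hb), hUeq ω hω b],
        ← eq_neg_of_add_eq_zero_left h0, hUeq ω hω j]
      have : U D θ j ω ≠ 0 := (hsupp ω).1 hω
      field_simp
    · simp only [e, if_neg hω]
  refine ⟨(⟨(D', E'), hmem⟩, θ), ⟨hθ, fun ω hω => ?_⟩, ?_⟩
  · change U D' θ j ω ≠ 0
    rw [hUeq ω hω j]
    exact (hsupp ω).1 hω
  · refine Prod.ext ?_ ?_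
    · ext k a
      change D' k a + (if a = i then realInvDFT n (d D' θ) k else 0) = D k a
      rw [hdeq]
      simp only [D', sub_add_cancel]
    · ext k b
      change E' k b + (if b = j then realInvDFT n (e D' E' θ) k else 0) = E k b
      rw [heeq]
      simp only [E', sub_add_cancel]

/-! ### Sparse vectors and rank one matrices -/

/-- Extension by zero of a vector indexed by a subset of the coordinates. -/
noncomputable def extendZero {m : ℕ} (T : Finset (Fin m)) (a : T → ℝ) : Fin m → ℝ :=
  fun i => if h : i ∈ T then a ⟨i, h⟩ else 0

lemma differentiable_extendZero {m : ℕ} (T : Finset (Fin m)) (i : Fin m) :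
    Differentiable ℝ fun a : T → ℝ => extendZero T a i := by
  by_cases h : i ∈ T
  · simp only [extendZero, h, dif_pos]
    fun_prop
  · simp only [extendZero, h, dif_neg, not_false_eq_true]
    fun_prop

lemma exists_extendZero_of_l0R_le {m s : ℕ} (x : Fin m → ℝ) (hx : l0R x ≤ s) :
    ∃ T : Finset (Fin m), T.card ≤ s ∧ ∃ a : T → ℝ, extendZero T a = x := by
  classical
  refine ⟨(Function.support x).toFinset, ?_, fun i => x i, ?_⟩
  · rwa [← Set.ncard_eq_toFinset_card']
  · ext i
    by_cases h : x i = 0 <;> simp [extendZero, h]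

/-- The factors of a nonzero rank one matrix are determined up to scaling. -/
lemma exists_scaling_of_outer_eq {m1 m2 : ℕ} {x x0 : Fin m1 → ℝ} {y y0 : Fin m2 → ℝ}
    (hx0 : x0 ≠ 0) (hy0 : y0 ≠ 0) (h : ∀ i j, x i * y j = x0 i * y0 j) :
    ∃ σ : ℝ, σ ≠ 0 ∧ x = σ • x0 ∧ y = σ⁻¹ • y0 := by
  obtain ⟨i, hi⟩ := Function.ne_iff.1 hx0
  obtain ⟨j, hj⟩ := Function.ne_iff.1 hy0
  simp only [Pi.zero_apply] at hi hj
  have hij : x i * y j ≠ 0 := by rw [h]; exact mul_ne_zero hi hj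
  have hxi : x i ≠ 0 := left_ne_zero_of_mul hij
  have hyj : y j ≠ 0 := right_ne_zero_of_mul hij
  have hx : x = (y0 j / y j) • x0 := by
    ext k
    have := h k j
    simp only [Pi.smul_apply, smul_eq_mul]
    field_simp
    linarith
  refine ⟨y0 j / y j, div_ne_zero hj hyj, hx, ?_⟩
  ext k
  have h1 := h i k
  have h2 := h i j
  simp only [Pi.smul_apply, smul_eq_mul, inv_div]
  field_simp
  refine mul_left_cancel₀ hxi ?_
  linear_combination y0 j * h1 - y0 k * h2

/-! ### Strong identifiability -/

/-- Strong identifiability of real blind deconvolution with sparsity constraints: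
if `n > 2(s1 + s2)`, then for Lebesgue-almost all real `(D, E)`, all nonzero sparse pairs
`(x0, y0)` are identifiable up to scaling among sparse pairs. -/
theorem strong_identifiability_sparse_real (n m1 m2 s1 s2 : ℕ) [NeZero n]
    (hm1 : 0 < m1) (hm2 : 0 < m2) (hs1 : 0 < s1) (hs2 : 0 < s2)
    (hs1m : s1 ≤ m1) (hs2m : s2 ≤ m2) (hn : 2 * (s1 + s2) < n) :
    ∀ᵐ DE : (ZMod n → Fin m1 → ℝ) × (ZMod n → Fin m2 → ℝ),
      ∀ x0 : Fin m1 → ℝ, x0 ≠ 0 → l0R x0 ≤ s1 →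
      ∀ y0 : Fin m2 → ℝ, y0 ≠ 0 → l0R y0 ≤ s2 →
      ∀ x : Fin m1 → ℝ, ∀ y : Fin m2 → ℝ, l0R x ≤ s1 → l0R y ≤ s2 →
        cconvR (mApplyR DE.1 x) (mApplyR DE.2 y) = cconvR (mApplyR DE.1 x0) (mApplyR DE.2 y0) →
        ∃ σ : ℝ, σ ≠ 0 ∧ x = σ • x0 ∧ y = σ⁻¹ • y0 := by
  -- Countably many null sets: one for each choice of supports, of an entry `(i, j)` where
  -- `x yᵀ - x0 y0ᵀ` does not vanish, and of a symmetric set of frequencies.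
  have key : ∀ (T T0 : Finset (Fin m1)) (R R0 : Finset (Fin m2)) (i : Fin m1) (j : Fin m2)
      (S : Finset (ZMod n)), T.card ≤ s1 → T0.card ≤ s1 → R.card ≤ s2 → R0.card ≤ s2 →
      (∀ ω, -ω ∈ S ↔ ω ∈ S) →
      ∀ᵐ w : (ZMod n → Fin m1 → ℝ) × (ZMod n → Fin m2 → ℝ),
        ¬ ∃ θ : ((T → ℝ) × (T0 → ℝ)) × ((R → ℝ) × (R0 → ℝ)),
          extendZero T θ.1.1 i * extendZero R θ.2.1 j -
            extendZero T0 θ.1.2 i * extendZero R0 θ.2.2 j ≠ 0 ∧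
          (∀ ω, ∑ b, (∑ a, ((extendZero T θ.1.1 a * extendZero R θ.2.1 b -
              extendZero T0 θ.1.2 a * extendZero R0 θ.2.2 b : ℝ) : ℂ) *
              realDFT n (fun k => w.1 k a) ω) * realDFT n (fun k => w.2 k b) ω = 0) ∧
          ∀ ω, ω ∈ S ↔ ∑ a, ((extendZero T θ.1.1 a * extendZero R θ.2.1 j -
              extendZero T0 θ.1.2 a * extendZero R0 θ.2.2 j : ℝ) : ℂ) *
              realDFT n (fun k => w.1 k a) ω ≠ 0 := by
    intro T T0 R R0 i j S hT hT0 hR hR0 hS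
    have hP : Module.finrank ℝ (((T → ℝ) × (T0 → ℝ)) × ((R → ℝ) × (R0 → ℝ))) < n := by
      simp only [Module.finrank_prod, Module.finrank_fintype_fun_eq_card, Fintype.card_coe]
      omega
    have := measure_annihilator_eq_zero hP
      (fun θ a b => extendZero T θ.1.1 a * extendZero R θ.2.1 b -
        extendZero T0 θ.1.2 a * extendZero R0 θ.2.2 b) ?_ i j hS
    · rw [ae_iff]
      simpa only [not_not] using this
    · intro a b
      have e1 := differentiable_extendZero T a
      have e2 := differentiable_extendZero T0 a
      have e3 := differentiable_extendZero R b
      have e4 := differentiable_extendZero R0 b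
      exact ((e1.comp (differentiable_fst.comp differentiable_fst)).mul
        (e3.comp (differentiable_fst.comp differentiable_snd))).sub
        ((e2.comp (differentiable_snd.comp differentiable_fst)).mul
        (e4.comp (differentiable_snd.comp differentiable_snd)))
  simp only [← eventually_all] at key
  filter_upwards [key] with w hw x0 hx0 hx0s y0 hy0 hy0s x y hxs hys hconv
  refine exists_scaling_of_outer_eq hx0 hy0 fun i j => ?_
  by_contra hij
  obtain ⟨T, hT, a, rfl⟩ := exists_extendZero_of_l0R_le x hxs
  obtain ⟨T0, hT0, a0, rfl⟩ := exists_extendZero_of_l0R_le x0 hx0s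
  obtain ⟨R, hR, b, rfl⟩ := exists_extendZero_of_l0R_le y hys
  obtain ⟨R0, hR0, b0, rfl⟩ := exists_extendZero_of_l0R_le y0 hy0s
  classical
  let v : ZMod n → ℝ := mApplyR w.1 fun p =>
    extendZero T a p * extendZero R b j - extendZero T0 a0 p * extendZero R0 b0 j
  refine hw T T0 R R0 i j (Finset.univ.filter fun ω => realDFT n v ω ≠ 0) hT hT0 hR hR0 ?_
    ⟨((a, a0), (b, b0)), sub_ne_zero.2 hij, fun ω => ?_, fun ω => ?_⟩
  · intro ω
    simp [realDFT_neg]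
  · have h := congrArg (fun u => realDFT n u ω) hconv
    simp only [realDFT_cconvR, realDFT_mApplyR, Finset.sum_mul_sum] at h
    rw [← sub_eq_zero] at h
    rw [← h]
    simp only [Finset.sum_mul]
    rw [Finset.sum_comm, ← Finset.sum_sub_distrib]
    refine Finset.sum_congr rfl fun p _ => ?_
    rw [← Finset.sum_sub_distrib]
    refine Finset.sum_congr rfl fun q _ => ?_
    push_cast
    ring
  · simp [v, realDFT_mApplyR]
end
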